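/- Let p be a prime with p > h. Suppose w·0 + pσ = w'·0 + pσ', where w, w' ∈ W and σ, σ' are dominant weights each satisfying (σ, α₀∨) ≤ 1 and (σ', α₀∨) ≤ 1 (i.e., each is zero or minuscule). Then w = w' and σ = σ'. In other words, a weight λ ∈ X⁺ ∩ C̄_ℤ that is weakly p-linked to 0 uniquely determines the pair (w, σ) with λ = w·0 + pσ. -/

import Mathlib

/-!
Put `τ = σ' - σ`, so that `p τ = w ρ - w' ρ`.

*`τ = 0`.*  Dominance and `⟨σ, α₀∨⟩, ⟨σ', α₀∨⟩ ≤ 1` force `⟨σ, β∨⟩, ⟨σ', β∨⟩ ∈ {0, 1}` for every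
positive root `β` (`IsCoord.pair_bound`), hence `⟨τ, β∨⟩ ∈ {-1, 0, 1}` for every root and
`|(τ, β)| = ⟨τ, β∨⟩ (τ, β)`.  The form `∑_β ⟨x, β∨⟩ (x, β)` is Weyl-invariant, so by
irreducibility it is a multiple of `(x, x)`; evaluation at `α₀` identifies the factor as `2h`
(`IsCoord.sum_form`).  Since `(u ρ, τ) ≤ ¼ ∑_β |(τ, β)|` for every `u ∈ W` (`IsCoord.rho_le`),
`p (τ, τ) = (w ρ, τ) - (w' ρ, τ) ≤ ½ ∑_β |(τ, β)| = h (τ, τ)`, and `p > h` gives `τ = 0`.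

*`w = w'`.*  Now `w'⁻¹ w` fixes `ρ`.  Such an element preserves the positive roots, and the
exchange property of words in the simple reflections shows that it is trivial
(`IsCoord.eq_one_of_rho`).
-/

open scoped RealInnerProductSpace

namespace PaperDNN

variable {E : Type*} [NormedAddCommGroup E] [InnerProductSpace ℝ E]

/-- The coroot pairing `⟨x, α∨⟩ = 2⟪x,α⟫/⟪α,α⟫`. -/
noncomputable def pair (x a : E) : ℝ := 2 * ⟪x, a⟫ / ⟪a, a⟫

/-- `Φ` is a reduced irreducible root system in the Euclidean space `E`. -/
structure IsRootSystem (Φ : Finset E) : Prop where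
  nonempty : Φ.Nonempty
  ne_zero : ∀ α ∈ Φ, α ≠ 0
  span_top : Submodule.span ℝ (Φ : Set E) = ⊤
  reduced : ∀ α ∈ Φ, ∀ t : ℝ, t • α ∈ Φ → t = 1 ∨ t = -1
  reflect_mem : ∀ α ∈ Φ, ∀ β ∈ Φ, β - pair β α • α ∈ Φ
  pair_int : ∀ α ∈ Φ, ∀ β ∈ Φ, ∃ n : ℤ, pair β α = (n : ℝ)
  irred : ∀ S T : Set E, S ∪ T = (Φ : Set E) → S.Nonempty → T.Nonempty →
      (∀ a ∈ S, ∀ b ∈ T, ⟪a, b⟫ = 0) → False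

/-- `Δ` is a base of simple roots for `Φ`: every root is a nonnegative or
nonpositive integral combination of the simple roots. -/
structure IsBase (Φ Δ : Finset E) : Prop where
  subset : Δ ⊆ Φ
  indep : LinearIndependent ℝ (fun a : {x // x ∈ Δ} => (a : E))
  root_decomp : ∀ β ∈ Φ, (∃ c : E → ℕ, β = ∑ α ∈ Δ, (c α : ℝ) • α) ∨
      (∃ c : E → ℕ, β = -(∑ α ∈ Δ, (c α : ℝ) • α))

open Classical in
/-- The positive roots `Φ⁺` of `Φ` with respect to the base `Δ`. -/
noncomputable def posRoots (Φ Δ : Finset E) : Finset E :=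
  Φ.filter fun β => ∃ c : E → ℕ, β = ∑ α ∈ Δ, (c α : ℝ) • α

/-- `ρ`, one-half the sum of the positive roots. -/
noncomputable def rho (Φ Δ : Finset E) : E := (2⁻¹ : ℝ) • ∑ β ∈ posRoots Φ Δ, β

/-- The Weyl group of `Φ`, the subgroup of `GL(E)` generated by the reflections
`s_α : x ↦ x − ⟨x,α∨⟩α` in the roots `α ∈ Φ`.  Applied to a subset `J` of the
simple roots it yields the parabolic subgroup `W_J`. -/
def Weyl (Φ : Finset E) : Subgroup (E ≃ₗ[ℝ] E) :=
  Subgroup.closure { w : E ≃ₗ[ℝ] E | ∃ α ∈ Φ, ∀ x, w x = x - pair x α • α }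

/-- The dot action `w·λ = w(λ+ρ) − ρ`. -/
noncomputable def dotAct (Φ Δ : Finset E) (w : E ≃ₗ[ℝ] E) (lam : E) : E :=
  w (lam + rho Φ Δ) - rho Φ Δ

/-- The weight lattice `X = {λ ∈ E : ⟨λ,α∨⟩ ∈ ℤ for all α ∈ Φ}`. -/
def weightLattice (Φ : Finset E) : Set E :=
  { lam | ∀ α ∈ Φ, ∃ n : ℤ, pair lam α = (n : ℝ) }

/-- The root lattice `ℤΦ`. -/
def rootLattice (Φ : Finset E) : AddSubgroup E := AddSubgroup.closure (Φ : Set E)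

/-- The bottom `p`-alcove `C_ℤ = {λ ∈ X : 0 < ⟨λ+ρ,β∨⟩ < p for all β ∈ Φ⁺}`. -/
def bottomAlcove (Φ Δ : Finset E) (p : ℕ) : Set E :=
  { lam ∈ weightLattice Φ | ∀ β ∈ posRoots Φ Δ,
      0 < pair (lam + rho Φ Δ) β ∧ pair (lam + rho Φ Δ) β < (p : ℝ) }

/-- The closure `C̄_ℤ = {λ ∈ X : 0 ≤ ⟨λ+ρ,β∨⟩ ≤ p for all β ∈ Φ⁺}` of the
bottom `p`-alcove. -/
def closedAlcove (Φ Δ : Finset E) (p : ℕ) : Set E :=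
  { lam ∈ weightLattice Φ | ∀ β ∈ posRoots Φ Δ,
      0 ≤ pair (lam + rho Φ Δ) β ∧ pair (lam + rho Φ Δ) β ≤ (p : ℝ) }

/-- Membership in `X⁺`, the set of dominant weights. -/
def isDominant (Φ Δ : Finset E) (lam : E) : Prop :=
  lam ∈ weightLattice Φ ∧ ∀ α ∈ Δ, 0 ≤ pair lam α

/-- `a₀` is the highest short root of `Φ`: a root of minimal length such that
every root of the same length is `≤ a₀` (their difference is a nonnegative
integral combination of simple roots). -/
structure IsHighestShortRoot (Φ Δ : Finset E) (a₀ : E) : Prop where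
  mem : a₀ ∈ Φ
  short : ∀ β ∈ Φ, ⟪a₀, a₀⟫ ≤ ⟪β, β⟫
  highest : ∀ β ∈ Φ, ⟪β, β⟫ = ⟪a₀, a₀⟫ →
      ∃ c : E → ℕ, a₀ - β = ∑ α ∈ Δ, (c α : ℝ) • α


/-! ### Reflections and the Weyl group -/

lemma pair_mul_inner {a : E} (ha : a ≠ 0) (x : E) : pair x a * ⟪a, a⟫ = 2 * ⟪x, a⟫ := by
  unfold pair
  have : ⟪a, a⟫ ≠ 0 := inner_self_ne_zero.mpr ha
  field_simp

lemma pair_self {a : E} (ha : a ≠ 0) : pair a a = 2 := by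
  unfold pair
  have : ⟪a, a⟫ ≠ 0 := inner_self_ne_zero.mpr ha
  field_simp

lemma pair_add (x y a : E) : pair (x + y) a = pair x a + pair y a := by
  simp only [pair, inner_add_left]; ring

lemma pair_sub (x y a : E) : pair (x - y) a = pair x a - pair y a := by
  simp only [pair, inner_sub_left]; ring

lemma pair_smul (t : ℝ) (x a : E) : pair (t • x) a = t * pair x a := by
  simp only [pair, real_inner_smul_left]; ring

lemma pair_neg_right (x a : E) : pair x (-a) = - pair x a := by
  simp only [pair, inner_neg_right, inner_neg_left, neg_neg]; ring

/-- The reflection `x ↦ x - ⟨x, a∨⟩ a` as a linear map; it is the identity when `a = 0`. -/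
noncomputable def reflLin (a : E) : E →ₗ[ℝ] E where
  toFun x := x - pair x a • a
  map_add' x y := by rw [pair_add]; module
  map_smul' t x := by rw [pair_smul]; simp only [RingHom.id_apply]; module

lemma reflLin_involutive (a : E) : Function.Involutive (reflLin a) := by
  intro x
  change (x - pair x a • a) - pair (x - pair x a • a) a • a = x
  by_cases ha : a = 0
  · simp [ha]
  · rw [pair_sub, pair_smul, pair_self ha]; module

/-- The reflection `x ↦ x - ⟨x, a∨⟩ a` as a linear automorphism. -/
noncomputable def refl (a : E) : E ≃ₗ[ℝ] E :=
  LinearEquiv.ofInvolutive (reflLin a) (reflLin_involutive a)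

lemma refl_apply (a x : E) : refl a x = x - pair x a • a := rfl

lemma refl_refl (a x : E) : refl a (refl a x) = x := reflLin_involutive a x

lemma refl_mul_self (a : E) : refl a * refl a = 1 := by
  ext x; exact refl_refl a x

lemma refl_inv (a : E) : (refl a)⁻¹ = refl a := inv_eq_of_mul_eq_one_left (refl_mul_self a)

lemma refl_inner (a x y : E) : ⟪refl a x, refl a y⟫ = ⟪x, y⟫ := by
  by_cases ha : a = 0
  · simp [refl_apply, ha]
  · have h1 := pair_mul_inner ha x
    have h2 := pair_mul_inner ha y
    simp only [refl_apply, inner_sub_left, inner_sub_right, real_inner_smul_left,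
      real_inner_smul_right]
    rw [real_inner_comm y a]
    linear_combination (pair y a / 2) * h1 + (pair x a / 2) * h2

lemma refl_self {a : E} (ha : a ≠ 0) : refl a a = -a := by
  rw [refl_apply, pair_self ha]; module

/-- A linear isometry conjugates the reflection in `a` to the reflection in the image of `a`. -/
lemma mul_refl (w : E ≃ₗ[ℝ] E) (hw : ∀ x y, ⟪w x, w y⟫ = ⟪x, y⟫) (a : E) :
    w * refl a = refl (w a) * w := by
  ext x
  change w (x - pair x a • a) = w x - pair (w x) (w a) • w a
  simp only [pair, hw, map_sub, map_smul]

variable {Φ Δ : Finset E}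

lemma weyl_props (hΦ : IsRootSystem Φ) {w : E ≃ₗ[ℝ] E} (hw : w ∈ Weyl Φ) :
    (∀ x y, ⟪w x, w y⟫ = ⟪x, y⟫) ∧ ∀ β ∈ Φ, w β ∈ Φ := by
  have hs : ∀ v ∈ Weyl Φ, ((∀ x y, ⟪v x, v y⟫ = ⟪x, y⟫) ∧ ∀ β ∈ Φ, v β ∈ Φ) := by
    intro v hv
    have key : ∀ v ∈ { w : E ≃ₗ[ℝ] E | ∃ α ∈ Φ, ∀ x, w x = x - pair x α • α },
        ∃ α ∈ Φ, v = refl α := by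
      rintro v ⟨α, hα, hv⟩
      exact ⟨α, hα, by ext x; exact hv x⟩
    unfold Weyl at hv
    induction hv using Subgroup.closure_induction'' with
    | mem v hv =>
      obtain ⟨α, hα, rfl⟩ := key v hv
      exact ⟨refl_inner α, fun β hβ => hΦ.reflect_mem α hα β hβ⟩
    | inv_mem v hv =>
      obtain ⟨α, hα, rfl⟩ := key v hv
      rw [refl_inv]
      exact ⟨refl_inner α, fun β hβ => hΦ.reflect_mem α hα β hβ⟩
    | one => exact ⟨fun _ _ => rfl, fun _ h => h⟩
    | mul u v _ _ hu hv =>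
      exact ⟨fun x y => (hu.1 _ _).trans (hv.1 _ _), fun β hβ => hu.2 _ (hv.2 β hβ)⟩
  exact hs w hw

lemma refl_mem_weyl {α : E} (hα : α ∈ Φ) : refl α ∈ Weyl Φ :=
  Subgroup.subset_closure ⟨α, hα, fun _ => rfl⟩

lemma neg_mem (hΦ : IsRootSystem Φ) {β : E} (hβ : β ∈ Φ) : -β ∈ Φ := by
  have := hΦ.reflect_mem β hβ β hβ
  rwa [← refl_apply, refl_self (hΦ.ne_zero β hβ)] at this

lemma sum_weyl (hΦ : IsRootSystem Φ) {w : E ≃ₗ[ℝ] E} (hw : w ∈ Weyl Φ)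
    {M : Type*} [AddCommMonoid M] (g : E → M) :
    ∑ β ∈ Φ, g (w β) = ∑ β ∈ Φ, g β := by
  refine Finset.sum_nbij' w (w⁻¹ : E ≃ₗ[ℝ] E) (weyl_props hΦ hw).2
    (weyl_props hΦ (inv_mem hw)).2 ?_ ?_ ?_
  · intro a _; exact w.symm_apply_apply a
  · intro a _; exact w.apply_symm_apply a
  · intro a _; rfl

/-! ### Coordinates with respect to the base -/

/-- `f` is the family of coordinate functionals of the base `Δ`; the values `f a` for `a ∉ Δ`
are irrelevant.  Membership in `posRoots` becomes a sign condition on the coordinates. -/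
structure IsCoord (Φ Δ : Finset E) (f : E → E →ₗ[ℝ] ℝ) : Prop where
  self : ∀ a ∈ Δ, f a a = 1
  other : ∀ a ∈ Δ, ∀ b ∈ Δ, b ≠ a → f a b = 0
  expand : ∀ x, x = ∑ a ∈ Δ, f a x • a
  sign : ∀ β ∈ Φ, (∀ a ∈ Δ, 0 ≤ f a β) ∨ (∀ a ∈ Δ, f a β ≤ 0)
  mem_pos : ∀ β, β ∈ posRoots Φ Δ ↔ β ∈ Φ ∧ ∀ a ∈ Δ, 0 ≤ f a β

lemma exists_coord (hΦ : IsRootSystem Φ) (hΔ : IsBase Φ Δ) :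
    ∃ f : E → E →ₗ[ℝ] ℝ, IsCoord Φ Δ f := by
  classical
  have hspan : ⊤ ≤ Submodule.span ℝ (Set.range (fun a : {x // x ∈ Δ} => (a : E))) := by
    rw [← hΦ.span_top, Submodule.span_le]
    have hc : ∀ c : E → ℕ, ∑ α ∈ Δ, (c α : ℝ) • α ∈
        Submodule.span ℝ (Set.range (fun a : {x // x ∈ Δ} => (a : E))) := fun c =>
      Submodule.sum_mem _ fun a ha => Submodule.smul_mem _ _
        (Submodule.subset_span ⟨⟨a, ha⟩, rfl⟩)
    intro β hβ
    rcases hΔ.root_decomp β hβ with ⟨c, h⟩ | ⟨c, h⟩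
    · rw [h]; exact hc c
    · rw [h]; exact Submodule.neg_mem _ (hc c)
  let b := Module.Basis.mk hΔ.indep hspan
  have hb : ∀ a : {x // x ∈ Δ}, b a = a := fun a => by simp [b]
  let f : E → E →ₗ[ℝ] ℝ := fun a => if h : a ∈ Δ then b.coord ⟨a, h⟩ else 0
  have hself : ∀ a ∈ Δ, f a a = 1 := by
    intro a ha
    have : f a (b ⟨a, ha⟩) = 1 := by simp [f, ha]
    rwa [hb] at this
  have hother : ∀ a ∈ Δ, ∀ c ∈ Δ, c ≠ a → f a c = 0 := by
    intro a ha c hc hne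
    have : f a (b ⟨c, hc⟩) = 0 := by
      simp [f, ha, hne]
    rwa [hb] at this
  have hcoef : ∀ (c : E → ℕ), ∀ a ∈ Δ, f a (∑ α ∈ Δ, (c α : ℝ) • α) = c a := by
    intro c a ha
    rw [map_sum, Finset.sum_eq_single a]
    · simp [hself a ha]
    · intro d hd hne; simp [hother a ha d hd hne]
    · intro h; exact absurd ha h
  have hexp : ∀ x, x = ∑ a ∈ Δ, f a x • a := by
    intro x
    conv_lhs => rw [← b.sum_repr x]
    rw [← Finset.sum_coe_sort Δ]
    refine Finset.sum_congr rfl fun a _ => ?_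
    simp [f, hb]
  have hsign : ∀ β ∈ Φ, (∀ a ∈ Δ, 0 ≤ f a β) ∨ (∀ a ∈ Δ, f a β ≤ 0) := by
    intro β hβ
    rcases hΔ.root_decomp β hβ with ⟨c, h⟩ | ⟨c, h⟩
    · left; intro a ha; rw [h, hcoef c a ha]; positivity
    · right; intro a ha; rw [h, map_neg, hcoef c a ha]; simp
  refine ⟨f, hself, hother, hexp, hsign, fun β => ?_⟩
  rw [posRoots, Finset.mem_filter]
  refine and_congr_right fun hβ => ⟨?_, ?_⟩
  · rintro ⟨c, h⟩ a ha
    rw [h, hcoef c a ha]; positivity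
  · intro hpos
    rcases hΔ.root_decomp β hβ with h | ⟨c, h⟩
    · exact h
    · -- all coordinates are both nonnegative and nonpositive, so `β = 0`
      refine absurd ?_ (hΦ.ne_zero β hβ)
      rw [hexp β]
      refine Finset.sum_eq_zero fun a ha => ?_
      have h1 := hpos a ha
      have h2 : f a β = -(c a : ℝ) := by
        conv_lhs => rw [h]
        rw [map_neg, hcoef c a ha]
      have h3 : (0 : ℝ) ≤ c a := by positivity
      have : f a β = 0 := by linarith
      rw [this, zero_smul]

variable {f : E → E →ₗ[ℝ] ℝ}

lemma IsCoord.eq_zero (hf : IsCoord Φ Δ f) {x : E} (hx : ∀ a ∈ Δ, f a x = 0) : x = 0 := by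
  rw [hf.expand x]
  exact Finset.sum_eq_zero fun a ha => by rw [hx a ha, zero_smul]

lemma IsCoord.neg_mem_pos (hf : IsCoord Φ Δ f) (hΦ : IsRootSystem Φ) {β : E} (hβ : β ∈ Φ)
    (h : β ∉ posRoots Φ Δ) : -β ∈ posRoots Φ Δ := by
  rw [hf.mem_pos] at h ⊢
  refine ⟨neg_mem hΦ hβ, fun a ha => ?_⟩
  rcases hf.sign β hβ with h' | h'
  · exact absurd ⟨hβ, h'⟩ h
  · rw [map_neg]; linarith [h' a ha]

lemma IsCoord.neg_notMem_pos (hf : IsCoord Φ Δ f) (hΦ : IsRootSystem Φ) {β : E}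
    (h : β ∈ posRoots Φ Δ) : -β ∉ posRoots Φ Δ := by
  intro h'
  rw [hf.mem_pos] at h h'
  refine hΦ.ne_zero β h.1 (hf.eq_zero fun a ha => ?_)
  have h1 := h.2 a ha
  have h2 := h'.2 a ha
  rw [map_neg] at h2
  linarith

lemma IsCoord.sum_even (hf : IsCoord Φ Δ f) (hΦ : IsRootSystem Φ) (g : E → ℝ)
    (hg : ∀ x, g (-x) = g x) : ∑ β ∈ Φ, g β = 2 * ∑ β ∈ posRoots Φ Δ, g β := by
  classical
  rw [← Finset.sum_filter_add_sum_filter_not Φ (fun β => β ∈ posRoots Φ Δ) g]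
  have h1 : Φ.filter (fun β => β ∈ posRoots Φ Δ) = posRoots Φ Δ := by
    ext β
    simp only [Finset.mem_filter, and_iff_right_iff_imp]
    exact fun h => ((hf.mem_pos β).1 h).1
  have h2 : ∑ β ∈ Φ.filter (fun β => β ∉ posRoots Φ Δ), g β = ∑ β ∈ posRoots Φ Δ, g β := by
    refine Finset.sum_nbij' (fun x => -x) (fun x => -x) ?_ ?_ ?_ ?_ ?_
    · intro a ha
      rw [Finset.mem_filter] at ha
      exact hf.neg_mem_pos hΦ ha.1 ha.2
    · intro a ha
      rw [Finset.mem_filter]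
      exact ⟨neg_mem hΦ ((hf.mem_pos a).1 ha).1, hf.neg_notMem_pos hΦ ha⟩
    · intro a _; exact neg_neg a
    · intro a _; exact neg_neg a
    · intro a _; exact (hg a).symm
  rw [h1, h2]; ring

/-- Pairing `w ρ` with any functional is bounded by the sum of absolute values over `Φ`,
because `4 w ρ = ∑ ± β` over all roots. -/
lemma IsCoord.rho_le (hf : IsCoord Φ Δ f) (hΦ : IsRootSystem Φ) {w : E ≃ₗ[ℝ] E}
    (hw : w ∈ Weyl Φ) (g : E →ₗ[ℝ] ℝ) :
    4 * g (w (rho Φ Δ)) ≤ ∑ β ∈ Φ, |g β| := by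
  rw [← sum_weyl hΦ hw (fun β => |g β|),
    hf.sum_even hΦ (fun β => |g (w β)|) (fun x => by simp)]
  have h1 : ∑ β ∈ posRoots Φ Δ, g (w β) ≤ ∑ β ∈ posRoots Φ Δ, |g (w β)| :=
    Finset.sum_le_sum fun β _ => le_abs_self _
  have h2 : g (w (rho Φ Δ)) = 2⁻¹ * ∑ β ∈ posRoots Φ Δ, g (w β) := by
    simp [rho, map_sum]
  linarith

/-! ### Freeness of the Weyl group action on `ρ` -/

lemma IsCoord.refl_coord (hf : IsCoord Φ Δ f) {a b : E} (ha : a ∈ Δ) (hb : b ∈ Δ) (h : a ≠ b)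
    (x : E) : f b (refl a x) = f b x := by
  rw [refl_apply, map_sub, map_smul, hf.other b hb a ha h]; simp

/-- A simple reflection `s_a` keeps every positive root other than `a` positive. -/
lemma IsCoord.refl_pos (hf : IsCoord Φ Δ f) (hΦ : IsRootSystem Φ) (hΔ : IsBase Φ Δ)
    {a γ : E} (ha : a ∈ Δ) (hγ : γ ∈ posRoots Φ Δ) (hne : γ ≠ a) :
    refl a γ ∈ posRoots Φ Δ := by
  have hγ' := (hf.mem_pos γ).1 hγ
  by_contra hcon
  have hmem : refl a γ ∈ Φ := hΦ.reflect_mem a (hΔ.subset ha) γ hγ'.1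
  have hneg := ((hf.mem_pos _).1 (hf.neg_mem_pos hΦ hmem hcon)).2
  -- all coordinates of `γ` away from `a` vanish, so `γ` is a multiple of `a`
  have hz : ∀ b ∈ Δ, b ≠ a → f b γ = 0 := by
    intro b hb hba
    have h1 := hneg b hb
    rw [map_neg, hf.refl_coord ha hb hba.symm] at h1
    linarith [hγ'.2 b hb]
  have hγa : γ = f a γ • a := by
    conv_lhs => rw [hf.expand γ]
    refine Finset.sum_eq_single a (fun b hb hba => by rw [hz b hb hba, zero_smul])
      (fun h => absurd ha h)
  have hr := hΦ.reduced a (hΔ.subset ha) (f a γ) (hγa ▸ hγ'.1)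
  have h0 := hγ'.2 a ha
  rcases hr with hr | hr
  · rw [hr, one_smul] at hγa; exact hne hγa
  · linarith

/-- A linear automorphism is `IsWord Δ n` when it is a product of `n` simple reflections. -/
inductive IsWord (Δ : Finset E) : ℕ → (E ≃ₗ[ℝ] E) → Prop
  | one : IsWord Δ 0 1
  | cons {n : ℕ} {w : E ≃ₗ[ℝ] E} (a : E) (ha : a ∈ Δ) (hw : IsWord Δ n w) :
      IsWord Δ (n + 1) (refl a * w)

lemma IsWord.mul {m n : ℕ} {v w : E ≃ₗ[ℝ] E} (hv : IsWord Δ m v) (hw : IsWord Δ n w) :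
    ∃ k, IsWord Δ k (v * w) := by
  induction hv with
  | one => exact ⟨n, by simpa using hw⟩
  | cons a ha _ ih =>
    obtain ⟨k, hk⟩ := ih
    exact ⟨k + 1, by rw [mul_assoc]; exact hk.cons a ha⟩

lemma IsWord.single {a : E} (ha : a ∈ Δ) : IsWord Δ 1 (refl a) := by
  simpa using IsWord.one.cons a ha

lemma IsWord.inv {n : ℕ} {w : E ≃ₗ[ℝ] E} (hw : IsWord Δ n w) : ∃ k, IsWord Δ k w⁻¹ := by
  induction hw with
  | one => exact ⟨0, by simpa using IsWord.one⟩
  | cons a ha _ ih =>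
    obtain ⟨k, hk⟩ := ih
    rw [mul_inv_rev, refl_inv]
    exact hk.mul (IsWord.single ha)

lemma IsWord.mem_weyl (hΔ : IsBase Φ Δ) {n : ℕ} {w : E ≃ₗ[ℝ] E} (hw : IsWord Δ n w) :
    w ∈ Weyl Φ := by
  induction hw with
  | one => exact one_mem _
  | cons a ha _ ih => exact mul_mem (refl_mem_weyl (hΔ.subset ha)) ih

lemma IsWord.exists_last {n : ℕ} {w : E ≃ₗ[ℝ] E} (hw : IsWord Δ (n + 1) w) :
    ∃ a ∈ Δ, ∃ u, IsWord Δ n u ∧ w = u * refl a := by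
  induction n generalizing w with
  | zero =>
    cases hw with
    | cons a ha hw =>
      cases hw
      exact ⟨a, ha, 1, IsWord.one, by simp⟩
  | succ n ih =>
    cases hw with
    | cons b hb hw =>
      obtain ⟨a, ha, u, hu, rfl⟩ := ih hw
      exact ⟨a, ha, refl b * u, hu.cons b hb, by rw [mul_assoc]⟩

/-- Reflections in positive roots are products of simple reflections, by descent on the height:
a non-simple positive root has a simple root with positive inner product. -/
lemma IsCoord.refl_isWord (hf : IsCoord Φ Δ f) (hΦ : IsRootSystem Φ) (hΔ : IsBase Φ Δ)
    {γ : E} (hγ : γ ∈ posRoots Φ Δ) : ∃ k, IsWord Δ k (refl γ) := by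
  classical
  by_contra hcon
  obtain ⟨δ, hδ, hmin⟩ := Finset.exists_min_image
    ((posRoots Φ Δ).filter fun x => ¬ ∃ k, IsWord Δ k (refl x))
    (fun x => ∑ a ∈ Δ, f a x) ⟨γ, Finset.mem_filter.2 ⟨hγ, hcon⟩⟩
  obtain ⟨hδpos, hδw⟩ := Finset.mem_filter.1 hδ
  have hδ' := (hf.mem_pos δ).1 hδpos
  have hex : ∃ a ∈ Δ, 0 < ⟪δ, a⟫ := by
    by_contra hno
    push Not at hno
    have h1 : 0 < ⟪δ, δ⟫ := real_inner_self_pos.mpr (hΦ.ne_zero δ hδ'.1)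
    have h2 : ⟪δ, δ⟫ = ∑ a ∈ Δ, f a δ * ⟪δ, a⟫ := by
      conv_lhs => enter [3]; rw [hf.expand δ]
      rw [inner_sum]
      exact Finset.sum_congr rfl fun a _ => real_inner_smul_right _ _ _
    have h3 : ∑ a ∈ Δ, f a δ * ⟪δ, a⟫ ≤ 0 :=
      Finset.sum_nonpos fun a ha => mul_nonpos_of_nonneg_of_nonpos (hδ'.2 a ha) (hno a ha)
    linarith
  obtain ⟨a, ha, hpos⟩ := hex
  have ha0 : a ≠ 0 := hΦ.ne_zero a (hΔ.subset ha)
  have hne : δ ≠ a := by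
    rintro rfl; exact hδw ⟨1, IsWord.single ha⟩
  have hη := hf.refl_pos hΦ hΔ ha hδpos hne
  have hword : ∃ k, IsWord Δ k (refl (refl a δ)) := by
    by_contra hno
    have h1 := hmin _ (Finset.mem_filter.2 ⟨hη, hno⟩)
    have h2 : ∑ b ∈ Δ, f b (refl a δ) = ∑ b ∈ Δ, f b δ - pair δ a := by
      simp only [refl_apply, map_sub, map_smul, Finset.sum_sub_distrib, smul_eq_mul]
      rw [← Finset.mul_sum, Finset.sum_eq_single a (fun b hb hba => hf.other b hb a ha hba.symm)
        (fun h => absurd ha h), hf.self a ha, mul_one]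
    have h3 : 0 < pair δ a := by
      unfold pair
      have := real_inner_self_pos.mpr ha0
      positivity
    linarith
  obtain ⟨k, hk⟩ := hword
  obtain ⟨l, hl⟩ := hk.mul (IsWord.single ha)
  refine hδw ⟨l + 1, ?_⟩
  have : refl δ = refl a * (refl (refl a δ) * refl a) := by
    rw [← mul_refl (refl a) (refl_inner a) δ, ← mul_assoc, refl_mul_self, one_mul]
  rw [this]
  exact hl.cons a ha

lemma refl_neg (a : E) : refl (-a) = refl a := by
  ext x; simp [refl_apply, pair_neg_right]

lemma IsCoord.weyl_isWord (hf : IsCoord Φ Δ f) (hΦ : IsRootSystem Φ) (hΔ : IsBase Φ Δ)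
    {w : E ≃ₗ[ℝ] E} (hw : w ∈ Weyl Φ) : ∃ k, IsWord Δ k w := by
  unfold Weyl at hw
  induction hw using Subgroup.closure_induction with
  | mem v hv =>
    obtain ⟨α, hα, hv⟩ := hv
    obtain rfl : v = refl α := by ext x; exact hv x
    by_cases hp : α ∈ posRoots Φ Δ
    · exact hf.refl_isWord hΦ hΔ hp
    · rw [← refl_neg]; exact hf.refl_isWord hΦ hΔ (hf.neg_mem_pos hΦ hα hp)
  | one => exact ⟨0, IsWord.one⟩
  | mul u v _ _ hu hv =>
    obtain ⟨m, hm⟩ := hu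
    obtain ⟨n, hn⟩ := hv
    exact hm.mul hn
  | inv u _ hu =>
    obtain ⟨m, hm⟩ := hu
    exact hm.inv

/-- The exchange property: if a word `u` makes the simple root `a` negative, then `u s_a` is a
word with one letter fewer than `u`. -/
lemma IsCoord.exchange (hf : IsCoord Φ Δ f) (hΦ : IsRootSystem Φ) (hΔ : IsBase Φ Δ)
    {a : E} (ha : a ∈ Δ) {n : ℕ} {u : E ≃ₗ[ℝ] E} (hu : IsWord Δ n u)
    (hneg : u a ∉ posRoots Φ Δ) : ∃ m, m + 1 = n ∧ IsWord Δ m (u * refl a) := by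
  induction hu with
  | one =>
    refine absurd ((hf.mem_pos _).2 ⟨hΔ.subset ha, fun b hb => ?_⟩) hneg
    by_cases hba : a = b
    · subst hba; simp [hf.self a ha]
    · simp [hf.other b hb a ha hba]
  | @cons n u b hb hu ih =>
    by_cases hp : u a ∈ posRoots Φ Δ
    · have hab : u a = b := by
        by_contra hne
        exact hneg (hf.refl_pos hΦ hΔ hb hp hne)
      refine ⟨n, rfl, ?_⟩
      rw [mul_assoc, mul_refl u (weyl_props hΦ (hu.mem_weyl hΔ)).1 a, hab, ← mul_assoc,
        refl_mul_self, one_mul]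
      exact hu
    · obtain ⟨m, hm, hw⟩ := ih hp
      exact ⟨m + 1, by omega, by rw [mul_assoc]; exact hw.cons b hb⟩

lemma IsCoord.word_eq_one (hf : IsCoord Φ Δ f) (hΦ : IsRootSystem Φ) (hΔ : IsBase Φ Δ)
    (n : ℕ) : ∀ v : E ≃ₗ[ℝ] E, IsWord Δ n v → (∀ a ∈ Δ, v a ∈ posRoots Φ Δ) → v = 1 := by
  induction n using Nat.strong_induction_on with
  | _ n ih =>
    intro v hv hpos
    rcases n with _ | n
    · cases hv; rfl
    · obtain ⟨a, ha, u, hu, rfl⟩ := hv.exists_last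
      have h1 := hpos a ha
      rw [LinearEquiv.mul_apply, refl_self (hΦ.ne_zero a (hΔ.subset ha)), map_neg] at h1
      have h2 : u a ∉ posRoots Φ Δ := by
        have := hf.neg_notMem_pos hΦ h1
        rwa [neg_neg] at this
      obtain ⟨m, hm, hw⟩ := hf.exchange hΦ hΔ ha hu h2
      exact ih m (by omega) _ hw hpos

/-- The stabilizer of `ρ` is trivial: comparing the heights of `2ρ` and `2vρ` shows that an
element fixing `ρ` preserves the positive roots. -/
lemma IsCoord.eq_one_of_rho (hf : IsCoord Φ Δ f) (hΦ : IsRootSystem Φ) (hΔ : IsBase Φ Δ)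
    {v : E ≃ₗ[ℝ] E} (hv : v ∈ Weyl Φ) (hρ : v (rho Φ Δ) = rho Φ Δ) : v = 1 := by
  obtain ⟨n, hn⟩ := hf.weyl_isWord hΦ hΔ hv
  refine hf.word_eq_one hΦ hΔ n v hn fun a ha => ?_
  have haΦ := hΔ.subset ha
  have hapos : a ∈ posRoots Φ Δ := by
    refine (hf.mem_pos _).2 ⟨haΦ, fun b hb => ?_⟩
    by_cases hba : a = b
    · subst hba; rw [hf.self a ha]; norm_num
    · rw [hf.other b hb a ha hba]
  let ht : E →ₗ[ℝ] ℝ := ∑ b ∈ Δ, f b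
  have hht : ∀ x, ht x = ∑ b ∈ Δ, f b x := fun x => by simp [ht]
  have hnn : ∀ β ∈ posRoots Φ Δ, 0 ≤ ht β := fun β hβ => by
    rw [hht]; exact Finset.sum_nonneg ((hf.mem_pos β).1 hβ).2
  have hρ2 : ∀ g : E →ₗ[ℝ] ℝ, g (rho Φ Δ) = 2⁻¹ * ∑ β ∈ posRoots Φ Δ, g β := fun g => by
    simp [rho, map_sum]
  have e1 : ∑ β ∈ posRoots Φ Δ, ht (v β) = ∑ β ∈ posRoots Φ Δ, ht β := by
    have h1 := hρ2 ht
    have h2 := hρ2 (ht ∘ₗ v.toLinearMap)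
    simp only [LinearMap.comp_apply, LinearEquiv.coe_coe] at h2
    rw [hρ] at h2
    linarith
  have e2 : ∑ β ∈ posRoots Φ Δ, |ht (v β)| = ∑ β ∈ posRoots Φ Δ, ht β := by
    have h1 := hf.sum_even hΦ (fun β => |ht (v β)|) (fun x => by simp)
    have h2 := hf.sum_even hΦ (fun β => |ht β|) (fun x => by simp)
    have h3 := sum_weyl hΦ hv (fun β => |ht β|)
    have h4 : ∑ β ∈ posRoots Φ Δ, |ht β| = ∑ β ∈ posRoots Φ Δ, ht β :=
      Finset.sum_congr rfl fun β hβ => abs_of_nonneg (hnn β hβ)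
    linarith
  have e3 := (Finset.sum_eq_sum_iff_of_le (fun β (_ : β ∈ posRoots Φ Δ) =>
    le_abs_self (ht (v β)))).1 (e1.trans e2.symm) a hapos
  by_contra hcon
  have hva : v a ∈ Φ := (weyl_props hΦ hv).2 a haΦ
  have hneg := hf.neg_mem_pos hΦ hva hcon
  have h0 := hnn _ hneg
  rw [map_neg] at h0
  have h1 : ht (v a) = 0 := le_antisymm (by linarith) (by rw [e3]; positivity)
  refine hΦ.ne_zero _ hva (hf.eq_zero fun b hb => ?_)
  have h2 := (hf.mem_pos _).1 hneg
  have h3 : ∑ b ∈ Δ, f b (-v a) = 0 := by rw [← hht, map_neg, h1, neg_zero]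
  have h4 := (Finset.sum_eq_zero_iff_of_nonneg h2.2).1 h3 b hb
  rw [map_neg] at h4
  linarith

/-! ### The invariant quadratic form -/

/-- Schur's lemma for the operator `x ↦ ∑ ⟨x, β∨⟩ β`: it commutes with reflections, so every
root is an eigenvector; it is self-adjoint, so non-orthogonal roots share their eigenvalue; and
by irreducibility it is scalar. -/
lemma exists_scalar (hΦ : IsRootSystem Φ) :
    ∃ c : ℝ, ∀ x, ∑ β ∈ Φ, pair x β • β = c • x := by
  let A : E →ₗ[ℝ] E :=
    { toFun := fun x => ∑ β ∈ Φ, pair x β • β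
      map_add' := fun x y => by simp only [pair_add, add_smul, Finset.sum_add_distrib]
      map_smul' := fun t x => by
        simp only [pair_smul, mul_smul, Finset.smul_sum, RingHom.id_apply] }
  have hA : ∀ x, A x = ∑ β ∈ Φ, pair x β • β := fun _ => rfl
  have hsa : ∀ x y, ⟪A x, y⟫ = ⟪x, A y⟫ := by
    intro x y
    rw [hA, hA, sum_inner, inner_sum]
    refine Finset.sum_congr rfl fun β _ => ?_
    rw [real_inner_smul_left, real_inner_smul_right, real_inner_comm y β]
    unfold pair; ring
  have hcomm : ∀ a ∈ Φ, ∀ x, A (refl a x) = refl a (A x) := by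
    intro a ha x
    rw [hA, hA, map_sum, ← sum_weyl hΦ (refl_mem_weyl ha)]
    refine Finset.sum_congr rfl fun β _ => ?_
    rw [map_smul]
    simp only [pair, refl_inner]
  have heig : ∀ a ∈ Φ, A a = (pair (A a) a / 2) • a := by
    intro a ha
    have h1 := hcomm a ha a
    rw [refl_self (hΦ.ne_zero a ha), map_neg, refl_apply] at h1
    have h2 : (2 : ℝ) • A a = pair (A a) a • a := by
      rw [two_smul]
      nth_rewrite 1 [← neg_neg (A a)]
      rw [h1]; abel
    rw [div_eq_inv_mul, mul_smul, ← h2, smul_smul]; norm_num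
  obtain ⟨a, ha⟩ := hΦ.nonempty
  let e : E → ℝ := fun b => pair (A b) b / 2
  refine ⟨e a, ?_⟩
  have hall : ∀ b ∈ Φ, e b = e a := by
    by_contra hno
    push Not at hno
    obtain ⟨b, hb, hne⟩ := hno
    refine hΦ.irred {x | x ∈ Φ ∧ e x = e a} {x | x ∈ Φ ∧ e x ≠ e a} ?_ ⟨a, ha, rfl⟩
      ⟨b, hb, hne⟩ ?_
    · ext x
      simp only [Set.mem_union, Set.mem_ofPred_eq, Finset.mem_coe]
      tauto
    · rintro x ⟨hx, hxe⟩ y ⟨hy, hye⟩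
      have h1 := hsa x y
      rw [heig x hx, heig y hy, real_inner_smul_left, real_inner_smul_right] at h1
      change e x * _ = e y * _ at h1
      by_contra h0
      exact hye ((mul_right_cancel₀ h0 h1).symm.trans hxe)
  have hext : A = e a • LinearMap.id := by
    refine LinearMap.ext_on hΦ.span_top ?_
    intro b hb
    change A b = e a • b
    rw [← hall b hb]
    exact heig b hb
  intro x
  rw [← hA, hext]; rfl

/-- The invariant form with explicit constant: `∑ ⟨x, β∨⟩ (x, β) = 2h (x, x)`, where the
constant is found by evaluating at `a₀`. -/
lemma IsCoord.sum_form (hf : IsCoord Φ Δ f) (hΦ : IsRootSystem Φ)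
    {a₀ : E} (ha₀ : IsHighestShortRoot Φ Δ a₀) (x : E) :
    ∑ β ∈ Φ, pair x β * ⟪x, β⟫ = 2 * (pair (rho Φ Δ) a₀ + 1) * ⟪x, x⟫ := by
  classical
  obtain ⟨c, hc⟩ := exists_scalar hΦ
  have hform : ∀ x, ∑ β ∈ Φ, pair x β * ⟪x, β⟫ = c * ⟪x, x⟫ := by
    intro x
    rw [← real_inner_smul_right, ← hc x, inner_sum]
    exact Finset.sum_congr rfl fun β _ => (real_inner_smul_right _ _ _).symm
  have h00 : a₀ ≠ 0 := hΦ.ne_zero a₀ ha₀.mem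
  have hpos0 : 0 < ⟪a₀, a₀⟫ := real_inner_self_pos.mpr h00
  -- `a₀` is dominant, since otherwise a reflection would produce a higher short root
  have hdom : ∀ β ∈ posRoots Φ Δ, 0 ≤ ⟪a₀, β⟫ := by
    intro β hβ
    have hβ' := (hf.mem_pos β).1 hβ
    by_contra hlt
    push Not at hlt
    obtain ⟨k, hk⟩ := ha₀.highest (refl β a₀) (hΦ.reflect_mem β hβ'.1 a₀ ha₀.mem)
      (refl_inner β a₀ a₀)
    have hp : pair a₀ β < 0 := by
      unfold pair
      have := real_inner_self_pos.mpr (hΦ.ne_zero β hβ'.1)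
      exact div_neg_of_neg_of_pos (by linarith) this
    rw [refl_apply, sub_sub_cancel] at hk
    refine hΦ.ne_zero β hβ'.1 (hf.eq_zero fun b hb => ?_)
    have h1 : pair a₀ β * f b β = k b := by
      have := congrArg (f b) hk
      rw [map_smul, smul_eq_mul, map_sum, Finset.sum_eq_single b
        (fun d hd hdb => by rw [map_smul, hf.other b hb d hd hdb, smul_zero])
        (fun h => absurd hb h), map_smul, hf.self b hb] at this
      simpa using this
    have h2 : (0 : ℝ) ≤ k b := by positivity
    have h3 := hβ'.2 b hb
    nlinarith
  have hterm : ∀ β ∈ Φ, pair a₀ β * ⟪a₀, β⟫ =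
      |⟪a₀, β⟫| + (if β = a₀ then ⟪a₀, a₀⟫ else 0) + (if β = -a₀ then ⟪a₀, a₀⟫ else 0) := by
    intro β hβ
    by_cases h1 : β = a₀
    · have h2 : a₀ ≠ -a₀ := fun h => by
        have := congrArg (fun x => ⟪a₀, x⟫) h
        simp only [inner_neg_right] at this
        linarith
      subst h1
      rw [pair_self h00, if_pos rfl, if_neg h2, abs_of_pos hpos0]; ring
    by_cases h2 : β = -a₀
    · subst h2
      rw [if_neg h1, if_pos rfl, pair_neg_right, pair_self h00, inner_neg_right, abs_neg,
        abs_of_pos hpos0]; ring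
    rw [if_neg h1, if_neg h2, add_zero, add_zero]
    have hb0 := hΦ.ne_zero β hβ
    have hbpos : 0 < ⟪β, β⟫ := real_inner_self_pos.mpr hb0
    have hm := pair_mul_inner hb0 a₀
    have hs := ha₀.short β hβ
    obtain ⟨n, hn⟩ := hΦ.pair_int β hβ a₀ ha₀.mem
    have hlow : 0 < ⟪a₀ - β, a₀ - β⟫ := real_inner_self_pos.mpr (sub_ne_zero.mpr (Ne.symm h1))
    have hhigh : 0 < ⟪a₀ + β, a₀ + β⟫ := real_inner_self_pos.mpr
      (fun h => h2 (eq_neg_of_add_eq_zero_right h))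
    rw [real_inner_sub_sub_self] at hlow
    rw [real_inner_add_add_self] at hhigh
    rw [hn] at hm ⊢
    have hn1 : n < 2 := by
      by_contra hge
      have : (2 : ℝ) ≤ n := by exact_mod_cast not_lt.mp hge
      nlinarith
    have hn2 : -2 < n := by
      by_contra hge
      have : (n : ℝ) ≤ -2 := by exact_mod_cast not_lt.mp hge
      nlinarith
    obtain rfl | rfl | rfl : n = -1 ∨ n = 0 ∨ n = 1 := by omega
    · push_cast at hm ⊢
      rw [abs_of_neg (by linarith)]; ring
    · push_cast at hm ⊢
      have : ⟪a₀, β⟫ = 0 := by linarith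
      simp [this]
    · push_cast at hm ⊢
      rw [abs_of_pos (by linarith)]; ring
  have habs : ∑ β ∈ Φ, |⟪a₀, β⟫| = 4 * ⟪a₀, rho Φ Δ⟫ := by
    rw [hf.sum_even hΦ (fun β => |⟪a₀, β⟫|) (fun x => by simp),
      Finset.sum_congr rfl (fun β hβ => abs_of_nonneg (hdom β hβ)), rho, real_inner_smul_right,
      inner_sum]
    ring
  have hsum := hform a₀
  rw [Finset.sum_congr rfl hterm, Finset.sum_add_distrib, Finset.sum_add_distrib,
    Finset.sum_ite_eq' Φ a₀, Finset.sum_ite_eq' Φ (-a₀), if_pos ha₀.mem,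
    if_pos (neg_mem hΦ ha₀.mem), habs] at hsum
  have hpr := pair_mul_inner h00 (rho Φ Δ)
  rw [real_inner_comm a₀ (rho Φ Δ)] at hpr
  have hcval : c = 2 * (pair (rho Φ Δ) a₀ + 1) := by
    refine mul_right_cancel₀ hpos0.ne' ?_
    linear_combination (-1) * hsum - 2 * hpr
  rw [hform x, hcval]

/-! ### Weights that are zero or minuscule -/

/-- By irreducibility every root is non-orthogonal to some root as short as `a₀`. -/
lemma exists_short (hΦ : IsRootSystem Φ) {a₀ : E} (ha₀ : a₀ ∈ Φ) {β : E} (hβ : β ∈ Φ) :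
    ∃ γ ∈ Φ, ⟪γ, γ⟫ = ⟪a₀, a₀⟫ ∧ ⟪γ, β⟫ ≠ 0 := by
  by_contra hno
  let P : E → Prop := fun b => ∃ γ ∈ Φ, ⟪γ, γ⟫ = ⟪a₀, a₀⟫ ∧ ⟪γ, b⟫ ≠ 0
  refine hΦ.irred {x | x ∈ Φ ∧ ¬ P x} {x | x ∈ Φ ∧ P x} ?_ ⟨β, hβ, hno⟩
    ⟨a₀, ha₀, a₀, ha₀, rfl, inner_self_ne_zero.mpr (hΦ.ne_zero a₀ ha₀)⟩ ?_
  · ext x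
    simp only [Set.mem_union, Set.mem_ofPred_eq, Finset.mem_coe]
    tauto
  · rintro b ⟨hb, hbP⟩ t ⟨ht, γ, hγ, hlen, hγt⟩
    have hort : ∀ δ ∈ Φ, ⟪δ, δ⟫ = ⟪a₀, a₀⟫ → ⟪δ, b⟫ = 0 := by
      intro δ hδ hl
      by_contra h
      exact hbP ⟨δ, hδ, hl, h⟩
    -- `b` is orthogonal to both `γ` and `s_t γ`, hence to their difference, a multiple of `t`
    have h1 := hort γ hγ hlen
    have h2 := hort (refl t γ) (hΦ.reflect_mem t ht γ hγ) ((refl_inner t γ γ).trans hlen)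
    rw [refl_apply, inner_sub_left, h1, real_inner_smul_left, zero_sub, neg_eq_zero] at h2
    have h3 : pair γ t ≠ 0 := by
      intro h
      have := pair_mul_inner (hΦ.ne_zero t ht) γ
      rw [h] at this
      exact hγt (by linarith)
    rw [real_inner_comm]
    exact (mul_eq_zero.mp h2).resolve_left h3

/-- A dominant `σ` with `⟨σ, a₀∨⟩ ≤ 1` has `⟨σ, β∨⟩ ∈ [0, 1]` for all positive roots `β`.
For `β` as short as `a₀` this is maximality of `a₀`.  A longer `β` has a short root `γ` with
`m = ⟨β, γ∨⟩ ≥ 2` and `m β∨ = γ∨ - (s_β γ)∨`, a difference of two short coroots. -/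
lemma IsCoord.pair_bound (hf : IsCoord Φ Δ f) (hΦ : IsRootSystem Φ) (hΔ : IsBase Φ Δ)
    {a₀ : E} (ha₀ : IsHighestShortRoot Φ Δ a₀) {σ : E} (hσ : isDominant Φ Δ σ)
    (hσm : pair σ a₀ ≤ 1) {β : E} (hβ : β ∈ posRoots Φ Δ) :
    0 ≤ pair σ β ∧ pair σ β ≤ 1 := by
  have hβ' := (hf.mem_pos β).1 hβ
  have h00 : a₀ ≠ 0 := hΦ.ne_zero a₀ ha₀.mem
  have hpos0 : 0 < ⟪a₀, a₀⟫ := real_inner_self_pos.mpr h00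
  have hbpos : 0 < ⟪β, β⟫ := real_inner_self_pos.mpr (hΦ.ne_zero β hβ'.1)
  have hsimple : ∀ a ∈ Δ, 0 ≤ ⟪σ, a⟫ := by
    intro a ha
    have h1 := hσ.2 a ha
    have h2 := pair_mul_inner (hΦ.ne_zero a (hΔ.subset ha)) σ
    have h3 : 0 ≤ ⟪a, a⟫ := real_inner_self_nonneg
    nlinarith [mul_nonneg h1 h3]
  have hnn : 0 ≤ ⟪σ, β⟫ := by
    rw [hf.expand β, inner_sum]
    refine Finset.sum_nonneg fun a ha => ?_
    rw [real_inner_smul_right]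
    exact mul_nonneg (hβ'.2 a ha) (hsimple a ha)
  have hσ0 : 2 * ⟪σ, a₀⟫ ≤ ⟪a₀, a₀⟫ := by
    rw [← pair_mul_inner h00]; nlinarith
  have hshort : ∀ γ ∈ Φ, ⟪γ, γ⟫ = ⟪a₀, a₀⟫ → 2 * ⟪σ, γ⟫ ≤ ⟪a₀, a₀⟫ := by
    intro γ hγ hlen
    obtain ⟨c, hc⟩ := ha₀.highest γ hγ hlen
    have h1 : 0 ≤ ⟪σ, a₀ - γ⟫ := by
      rw [hc, inner_sum]
      refine Finset.sum_nonneg fun a ha => ?_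
      rw [real_inner_smul_right]
      exact mul_nonneg (by positivity) (hsimple a ha)
    rw [inner_sub_right] at h1
    linarith
  refine ⟨by unfold pair; positivity, ?_⟩
  suffices h : 2 * ⟪σ, β⟫ ≤ ⟪β, β⟫ by
    unfold pair; rwa [div_le_one hbpos]
  by_cases hlenb : ⟪β, β⟫ = ⟪a₀, a₀⟫
  · rw [hlenb]; exact hshort β hβ'.1 hlenb
  have hlong : ⟪a₀, a₀⟫ < ⟪β, β⟫ := lt_of_le_of_ne (ha₀.short β hβ'.1) (Ne.symm hlenb)
  obtain ⟨γ, hγ, hlen, hgb⟩ : ∃ γ ∈ Φ, ⟪γ, γ⟫ = ⟪a₀, a₀⟫ ∧ 0 < ⟪γ, β⟫ := by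
    obtain ⟨γ, hγ, hlen, hne⟩ := exists_short hΦ ha₀.mem hβ'.1
    rcases lt_or_gt_of_ne hne with h | h
    · exact ⟨-γ, neg_mem hΦ hγ, by simpa using hlen, by simpa using h⟩
    · exact ⟨γ, hγ, hlen, h⟩
  obtain ⟨n, hn⟩ := hΦ.pair_int β hβ'.1 γ hγ
  have hm := pair_mul_inner (hΦ.ne_zero β hβ'.1) γ
  have hnpos : (1 : ℝ) ≤ n := by
    have : (0 : ℝ) < n := by rw [← hn]; unfold pair; positivity
    exact_mod_cast this
  have h1 := hshort γ hγ hlen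
  have h2 := hshort (-(refl β γ)) (neg_mem hΦ (hΦ.reflect_mem β hβ'.1 γ hγ)) (by
    rw [inner_neg_neg, refl_inner]; exact hlen)
  rw [refl_apply, inner_neg_right, inner_sub_right, real_inner_smul_right, hn] at h2
  -- with `k = ⟨β, γ∨⟩`: the sum of `h1` and `h2` is `n (σ, β) ≤ (a₀, a₀)`, while
  -- `n (β, β) = k (a₀, a₀)` forces `k ≥ 2` because `β` is strictly longer than `a₀`
  obtain ⟨k, hk⟩ := hΦ.pair_int γ hγ β hβ'.1
  have hmk := pair_mul_inner (hΦ.ne_zero γ hγ) β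
  rw [hk, hlen, real_inner_comm γ β] at hmk
  rw [hn] at hm
  have hk1 : (1 : ℝ) < k := by
    by_contra hle
    push Not at hle
    nlinarith
  have hk2 : (2 : ℝ) ≤ k := by
    have : (1 : ℤ) < k := by exact_mod_cast hk1
    exact_mod_cast this
  have h3 : 2 * ⟪a₀, a₀⟫ ≤ n * ⟪β, β⟫ := by nlinarith
  refine le_of_mul_le_mul_left ?_ (lt_of_lt_of_le one_pos hnpos)
  linarith

/-- Let `p` be a prime with `p > h`.  Suppose
`w·0 + pσ = w'·0 + pσ'` where `w, w' ∈ W` and `σ, σ'` are dominant weights each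
satisfying `(·, α₀∨) ≤ 1` (i.e. each is zero or minuscule).  Then `w = w'` and
`σ = σ'`. -/
theorem statement9
    (Φ Δ : Finset E) (hΦ : IsRootSystem Φ) (hΔ : IsBase Φ Δ)
    (a₀ : E) (ha₀ : IsHighestShortRoot Φ Δ a₀)
    (h : ℕ) (hcox : (h : ℝ) = pair (rho Φ Δ) a₀ + 1)
    (p : ℕ) (hp : p.Prime) (hbig : h < p)
    (w w' : E ≃ₗ[ℝ] E) (hw : w ∈ Weyl Φ) (hw' : w' ∈ Weyl Φ)
    (σ σ' : E) (hσ : isDominant Φ Δ σ) (hσ' : isDominant Φ Δ σ')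
    (hσm : pair σ a₀ ≤ 1) (hσ'm : pair σ' a₀ ≤ 1)
    (heq : dotAct Φ Δ w 0 + (p : ℝ) • σ = dotAct Φ Δ w' 0 + (p : ℝ) • σ') :
    w = w' ∧ σ = σ' := by
  obtain ⟨f, hf⟩ := exists_coord hΦ hΔ
  have hdiff : (p : ℝ) • (σ' - σ) = w (rho Φ Δ) - w' (rho Φ Δ) := by
    simp only [dotAct, zero_add] at heq
    rw [smul_sub, sub_eq_sub_iff_add_eq_add]
    rw [sub_add_eq_add_sub, sub_add_eq_add_sub, sub_left_inj] at heq
    rw [add_comm, ← heq]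
  have hτ0 : σ' - σ = 0 := by
    by_contra hne
    set τ := σ' - σ with hτ
    have hτpos : 0 < ⟪τ, τ⟫ := real_inner_self_pos.mpr hne
    -- `⟨τ, β∨⟩ ∈ {-1, 0, 1}`, so it is the sign of `(τ, β)`
    have hterm : ∀ β ∈ posRoots Φ Δ, |⟪τ, β⟫| = pair τ β * ⟪τ, β⟫ := by
      intro β hβ
      have hβΦ := ((hf.mem_pos β).1 hβ).1
      have hb0 := hΦ.ne_zero β hβΦ
      have hbpos : 0 < ⟪β, β⟫ := real_inner_self_pos.mpr hb0
      obtain ⟨h1, h2⟩ := hf.pair_bound hΦ hΔ ha₀ hσ hσm hβ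
      obtain ⟨h3, h4⟩ := hf.pair_bound hΦ hΔ ha₀ hσ' hσ'm hβ
      obtain ⟨m, hm⟩ := hσ.1 β hβΦ
      obtain ⟨m', hm'⟩ := hσ'.1 β hβΦ
      have hpτ : pair τ β = ((m' - m : ℤ) : ℝ) := by
        rw [hτ, pair_sub, hm, hm']; push_cast; ring
      have hmul := pair_mul_inner hb0 τ
      rw [hm] at h1 h2
      rw [hm'] at h3 h4
      have h1' : 0 ≤ m := by exact_mod_cast h1
      have h2' : m ≤ 1 := by exact_mod_cast h2
      have h3' : 0 ≤ m' := by exact_mod_cast h3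
      have h4' : m' ≤ 1 := by exact_mod_cast h4
      rw [hpτ] at hmul ⊢
      obtain h | h | h : m' - m = -1 ∨ m' - m = 0 ∨ m' - m = 1 := by omega
      · rw [h] at hmul ⊢
        push_cast at hmul ⊢
        rw [abs_of_neg (by linarith)]; ring
      · rw [h] at hmul ⊢
        push_cast at hmul ⊢
        have : ⟪τ, β⟫ = 0 := by linarith
        simp [this]
      · rw [h] at hmul ⊢
        push_cast at hmul ⊢
        rw [abs_of_pos (by linarith)]; ring
    have hS : ∑ β ∈ Φ, |⟪τ, β⟫| = 2 * (h : ℝ) * ⟪τ, τ⟫ := by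
      rw [hcox, ← hf.sum_form hΦ ha₀ τ, hf.sum_even hΦ (fun β => |⟪τ, β⟫|) (fun x => by simp),
        hf.sum_even hΦ (fun β => pair τ β * ⟪τ, β⟫) (fun x => by
          simp [pair_neg_right, inner_neg_right]), Finset.sum_congr rfl hterm]
    have b1 := hf.rho_le hΦ hw (innerₛₗ ℝ τ)
    have b2 := hf.rho_le hΦ hw' (-(innerₛₗ ℝ τ))
    simp only [LinearMap.neg_apply, innerₛₗ_apply_apply, abs_neg] at b1 b2
    rw [hS] at b1 b2
    have hin := congrArg (fun x => ⟪τ, x⟫) hdiff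
    simp only [inner_sub_right, real_inner_smul_right] at hin
    have hlt : (h : ℝ) < p := by exact_mod_cast hbig
    nlinarith
  have hρ : w (rho Φ Δ) = w' (rho Φ Δ) := by
    rw [hτ0, smul_zero] at hdiff
    exact (sub_eq_zero.mp hdiff.symm)
  refine ⟨?_, (sub_eq_zero.mp hτ0).symm⟩
  have h1 : w'⁻¹ * w = 1 := by
    refine hf.eq_one_of_rho hΦ hΔ (mul_mem (inv_mem hw') hw) ?_
    change w'.symm (w (rho Φ Δ)) = rho Φ Δ
    rw [hρ, LinearEquiv.symm_apply_apply]
  exact (inv_mul_eq_one.mp h1).symm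

end PaperDNN
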